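/- arXiv:1712.08306 — 2 statements merged into one kernel-verified Lean document; each statement's English description precedes it below -/
import Mathlib

section
/- For all integers i, j and every integer k ≥ 1, the bimoment determinants satisfy the bilinear identity G_{k+1}^{(i,j)} G_{k−1}^{(i+1,j+1)} = G_k^{(i,j)} G_k^{(i+1,j+1)} − G_k^{(i,j+1)} G_k^{(i+1,j)}. -/
open Finset

/-- Single moments `α_i = Σ_p ζ_p^i a_p`. -/
noncomputable def alphaM (n : ℕ) (ζ a : Fin n → ℝ) (i : ℤ) : ℝ :=
  ∑ p : Fin n, ζ p ^ i * a p

/-- Bimoments `I_{i,j} = Σ_p Σ_q ζ_p^i ζ_q^j / (ζ_p + ζ_q) a_p a_q`. -/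
noncomputable def Imom (n : ℕ) (ζ a : Fin n → ℝ) (i j : ℤ) : ℝ :=
  ∑ p : Fin n, ∑ q : Fin n, ζ p ^ i * ζ q ^ j / (ζ p + ζ q) * (a p * a q)

/-- `F_k^{(i,j)} = det (I_{i+r,j+s})_{0 ≤ r,s ≤ k-1}`, with `F_0 = 1` and `F_k = 0` for `k < 0`. -/
noncomputable def Fdet (n : ℕ) (ζ a : Fin n → ℝ) (i j k : ℤ) : ℝ :=
  if k < 0 then 0
  else Matrix.det (Matrix.of fun r s : Fin k.toNat =>
    Imom n ζ a (i + ((r : ℕ) : ℤ)) (j + ((s : ℕ) : ℤ)))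

/-- `G_k^{(i,j)}`: first column `(α_{i-1}, …, α_{i+k-2})ᵀ`, remaining block
`(I_{i+r,j+s})_{0 ≤ r ≤ k-1, 0 ≤ s ≤ k-2}`; `G_1 = α_{i-1}` and `G_k = 0` for `k < 1`. -/
noncomputable def Gdet (n : ℕ) (ζ a : Fin n → ℝ) (i j k : ℤ) : ℝ :=
  if k < 1 then 0
  else Matrix.det (Matrix.of fun r s : Fin k.toNat =>
    if (s : ℕ) = 0 then alphaM n ζ a (i - 1 + ((r : ℕ) : ℤ))
    else Imom n ζ a (i + ((r : ℕ) : ℤ)) (j + (((s : ℕ) - 1 : ℕ) : ℤ)))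

/-- `E_k^{(i,j)}`: `(1,1)` entry `0`, first row `(0, α_{j-1}, …, α_{j+k-3})`, first column
`(0, α_{i-1}, …, α_{i+k-3})ᵀ`, remaining block `(I_{i+r,j+s})_{0 ≤ r,s ≤ k-2}`;
`E_k = 0` for `k < 2`. -/
noncomputable def Edet (n : ℕ) (ζ a : Fin n → ℝ) (i j k : ℤ) : ℝ :=
  if k < 2 then 0
  else Matrix.det (Matrix.of fun r s : Fin k.toNat =>
    if (r : ℕ) = 0 then
      (if (s : ℕ) = 0 then 0 else alphaM n ζ a (j - 1 + (((s : ℕ) - 1 : ℕ) : ℤ)))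
    else if (s : ℕ) = 0 then alphaM n ζ a (i - 1 + (((r : ℕ) - 1 : ℕ) : ℤ))
    else Imom n ζ a (i + (((r : ℕ) - 1 : ℕ) : ℤ)) (j + (((s : ℕ) - 1 : ℕ) : ℤ)))

/-!
In `G_{k+1}^{(i,j)}`, deleting the last or the first row and the last or the second column (the
column headed by `I_{i,j}`) produces the determinants of order `k` in the identity, and deleting
both rows and both columns produces `G_{k-1}^{(i+1,j+1)}`. So the identity is an instance of the
Desnanot–Jacobi identity.

Desnanot–Jacobi is the case of standard basis vectors of an identity of Plücker type: if two columns
of `A` are replaced by `u` and `v`, scaling the first replacement by `det A` turns `u` into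
`A *ᵥ A.cramer u`, a combination of the columns of `A` that can be expanded by multilinearity
without dividing by `det A`.
-/

section DesnanotJacobi

open Matrix

variable {R N : Type*} [CommRing R] [Fintype N] [DecidableEq N]

lemma cramer_mulVec (A : Matrix N N R) (x : N → R) : A.cramer (A *ᵥ x) = A.det • x := by
  rw [cramer_eq_adjugate_mulVec, mulVec_mulVec, adjugate_mul, smul_mulVec, one_mulVec]

lemma mulVec_eq_updateCol_mulVec_add (A : Matrix N N R) (q : N) (v x : N → R) :
    A *ᵥ x = A.updateCol q v *ᵥ x + x q • (A.col q - v) := by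
  have hA : A = A.updateCol q v + vecMulVec (A.col q - v) (Pi.single q 1) := by
    ext r s
    rcases eq_or_ne s q with rfl | hs <;> simp [vecMulVec_apply, *]
  conv_lhs => rw [hA]
  rw [add_mulVec, vecMulVec_mulVec, single_one_dotProduct, op_smul_eq_smul]

lemma det_updateCol_updateCol_swap (A : Matrix N N R) {p q : N} (hpq : p ≠ q) (u v : N → R) :
    ((A.updateCol p u).updateCol q v).det = -((A.updateCol p v).updateCol q u).det := by
  have hswap : (A.updateCol p u).updateCol q v =
      ((A.updateCol p v).updateCol q u).submatrix id (Equiv.swap p q) := by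
    ext x y
    rcases eq_or_ne y p with rfl | hyp
    · simp [hpq]
    rcases eq_or_ne y q with rfl | hyq
    · simp [hpq]
    · simp [Equiv.swap_apply_of_ne_of_ne, hyp, hyq]
  rw [hswap, det_permute', Equiv.Perm.sign_swap hpq]
  simp

theorem det_mul_det_updateCol_updateCol (A : Matrix N N R) {p q : N} (hpq : p ≠ q) (u v : N → R) :
    A.det * ((A.updateCol p u).updateCol q v).det =
      A.cramer u p * A.cramer v q - A.cramer u q * A.cramer v p := by
  set B := A.updateCol q v with hB
  have hv : B.cramer v p = 0 := by
    rw [cramer_apply]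
    exact det_zero_of_column_eq hpq fun x => by simp [hB, hpq.symm]
  have hcol : B.cramer (A.col q) p = -A.cramer v p := by
    rw [cramer_apply, cramer_apply, hB, updateCol_comm _ hpq.symm,
      det_updateCol_updateCol_swap _ hpq, updateCol_comm _ hpq,
      show A.updateCol q (A.col q) = A from updateCol_eq_self A q]
  calc A.det * ((A.updateCol p u).updateCol q v).det
      = B.cramer (A *ᵥ A.cramer u) p := by
        rw [mulVec_cramer, map_smul, Pi.smul_apply, smul_eq_mul, cramer_apply, hB,
          updateCol_comm _ hpq]
    _ = B.det * A.cramer u p + A.cramer u q * (B.cramer (A.col q) p - B.cramer v p) := by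
        rw [mulVec_eq_updateCol_mulVec_add A q v, map_add, cramer_mulVec, map_smul, map_sub]
        rfl
    _ = A.cramer u p * A.cramer v q - A.cramer u q * A.cramer v p := by
        rw [hv, hcol, cramer_apply A v q]
        ring

lemma cramer_single_one_apply {n : ℕ} (A : Matrix (Fin (n + 1)) (Fin (n + 1)) R)
    (r c : Fin (n + 1)) :
    A.cramer (Pi.single r 1) c =
      (-1) ^ (r + c : ℕ) * (A.submatrix r.succAbove c.succAbove).det := by
  rw [cramer_eq_adjugate_mulVec, mulVec_single_one, col_apply,
    adjugate_fin_succ_eq_det_submatrix]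

lemma det_updateCol_single_updateCol_single_last {n : ℕ}
    (A : Matrix (Fin (n + 2)) (Fin (n + 2)) R) (r c : Fin (n + 1)) :
    ((A.updateCol c.castSucc (Pi.single r.castSucc 1)).updateCol (Fin.last (n + 1))
        (Pi.single (Fin.last (n + 1)) 1)).det =
      (-1) ^ (r + c : ℕ) *
        ((A.submatrix Fin.castSucc Fin.castSucc).submatrix r.succAbove c.succAbove).det := by
  have hsub : (A.updateCol c.castSucc (Pi.single r.castSucc 1)).submatrix
        Fin.castSucc Fin.castSucc =
      (A.submatrix Fin.castSucc Fin.castSucc).updateCol c (Pi.single r 1) := by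
    ext x y
    simp [updateCol_apply, Pi.single_apply]
  rw [← cramer_apply, cramer_single_one_apply, Fin.succAbove_last, hsub,
    Even.neg_one_pow ⟨_, rfl⟩, one_mul, ← cramer_apply, cramer_single_one_apply]

theorem desnanot_jacobi {n : ℕ} (A : Matrix (Fin (n + 2)) (Fin (n + 2)) R) (r c : Fin (n + 1)) :
    A.det * ((A.submatrix Fin.castSucc Fin.castSucc).submatrix r.succAbove c.succAbove).det =
      (A.submatrix Fin.castSucc Fin.castSucc).det *
          (A.submatrix r.castSucc.succAbove c.castSucc.succAbove).det -
        (A.submatrix Fin.castSucc c.castSucc.succAbove).det *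
          (A.submatrix r.castSucc.succAbove Fin.castSucc).det := by
  have hcols : c.castSucc ≠ Fin.last (n + 1) := (Fin.castSucc_lt_last c).ne
  have hminors := det_mul_det_updateCol_updateCol A hcols
    (Pi.single r.castSucc 1) (Pi.single (Fin.last (n + 1)) 1)
  rw [det_updateCol_single_updateCol_single_last] at hminors
  simp only [cramer_single_one_apply, Fin.succAbove_last, Fin.val_castSucc, Fin.val_last, pow_add]
    at hminors
  have hsq : ((-1 : R) ^ (n + 1)) ^ 2 = 1 := by rw [← pow_mul', pow_mul, neg_one_sq, one_pow]
  have hsign : IsUnit ((-1 : R) ^ (r + c : ℕ)) := isUnit_one.neg.pow _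
  refine hsign.mul_left_cancel ?_
  linear_combination hminors + (-1) ^ (r + c : ℕ) *
    ((A.submatrix Fin.castSucc Fin.castSucc).det *
        (A.submatrix r.castSucc.succAbove c.castSucc.succAbove).det -
      (A.submatrix Fin.castSucc c.castSucc.succAbove).det *
        (A.submatrix r.castSucc.succAbove Fin.castSucc).det) * hsq

end DesnanotJacobi

section BorderedMatrix

variable {R : Type*} (α : ℤ → R) (I : ℤ → ℤ → R) (i j : ℤ)

/-- The infinite matrix with first column `(α_{i-1}, α_i, …)ᵀ` followed by the block
`(I_{i+r,j+s})_{r,s ≥ 0}`. Its leading principal submatrices are the matrices of the `G_k^{(i,j)}`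
for arbitrary sequences `α` and `I` in place of the moments. -/
def borderedMatrix : Matrix ℕ ℕ R :=
  Matrix.of fun r s => if s = 0 then α (i - 1 + r) else I (i + r) (j + (s - 1 : ℕ))

lemma borderedMatrix_submatrix_add_one {m n : Type*} (f : m → ℕ) (g : n → ℕ) :
    (borderedMatrix α I i j).submatrix (fun r => f r + 1) g =
      (borderedMatrix α I (i + 1) j).submatrix f g := by
  ext r s
  simp only [borderedMatrix, Matrix.submatrix_apply, Matrix.of_apply, Nat.cast_add, Nat.cast_one]
  congr 2 <;> ring

lemma borderedMatrix_submatrix_one_succAbove {m : Type*} {n : ℕ} (f : m → ℕ) :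
    (borderedMatrix α I i j).submatrix f (fun s : Fin (n + 1) => (Fin.succAbove 1 s).val) =
      (borderedMatrix α I i (j + 1)).submatrix f Fin.val := by
  ext r s
  cases s using Fin.cases with
  | zero => rfl
  | succ s =>
    simp only [borderedMatrix, Matrix.submatrix_apply, Matrix.of_apply, Fin.one_succAbove_succ,
      Fin.val_succ, Nat.add_eq_zero_iff, one_ne_zero, and_false, if_false, Nat.add_sub_cancel,
      Nat.cast_add, Nat.cast_one]
    congr 1
    ring

end BorderedMatrix

section BorderedDet

variable {R : Type*} [CommRing R] (α : ℤ → R) (I : ℤ → ℤ → R) (i j : ℤ)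

/-- The determinant `G_k^{(i,j)}` for arbitrary sequences `α` and `I` in place of the moments, with
the convention that it is `0` for `k < 1`. -/
def borderedDet (k : ℤ) : R :=
  if k < 1 then 0
  else ((borderedMatrix α I i j).submatrix (Fin.val : Fin k.toNat → ℕ) Fin.val).det

lemma borderedDet_natCast_succ (k : ℕ) :
    borderedDet α I i j (k + 1 : ℕ) =
      ((borderedMatrix α I i j).submatrix (Fin.val : Fin (k + 1) → ℕ) Fin.val).det :=
  if_neg (by lia)

lemma borderedDet_one : borderedDet α I i j 1 = α (i - 1) := by
  simpa [borderedMatrix] using borderedDet_natCast_succ α I i j 0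

lemma borderedDet_bilinear_natCast (m : ℕ) :
    borderedDet α I i j (m + 3 : ℕ) * borderedDet α I (i + 1) (j + 1) (m + 1 : ℕ) =
      borderedDet α I i j (m + 2 : ℕ) * borderedDet α I (i + 1) (j + 1) (m + 2 : ℕ) -
        borderedDet α I i (j + 1) (m + 2 : ℕ) * borderedDet α I (i + 1) j (m + 2 : ℕ) := by
  have hminors := desnanot_jacobi ((borderedMatrix α I i j).submatrix
    (Fin.val : Fin (m + 3) → ℕ) (Fin.val : Fin (m + 3) → ℕ)) 0 1
  simp only [Fin.castSucc_zero, Fin.castSucc_one, Fin.succAbove_zero, Matrix.submatrix_submatrix,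
    Function.comp_def, Fin.val_castSucc, Fin.val_succ, borderedMatrix_submatrix_add_one,
    borderedMatrix_submatrix_one_succAbove] at hminors
  simpa only [borderedDet_natCast_succ] using hminors

theorem stmt_10_general {k : ℤ} (hk : 1 ≤ k) :
    borderedDet α I i j (k + 1) * borderedDet α I (i + 1) (j + 1) (k - 1) =
      borderedDet α I i j k * borderedDet α I (i + 1) (j + 1) k -
        borderedDet α I i (j + 1) k * borderedDet α I (i + 1) j k := by
  rcases hk.eq_or_lt with rfl | hk
  · have hzero : borderedDet α I (i + 1) (j + 1) (1 - 1) = 0 := if_pos (by lia)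
    simp only [hzero, borderedDet_one]
    ring
  · obtain ⟨m, rfl⟩ : ∃ m : ℕ, k = (m + 2 : ℕ) := ⟨(k - 2).toNat, by lia⟩
    have hpred : ((m + 2 : ℕ) : ℤ) - 1 = (m + 1 : ℕ) := by lia
    rw [hpred]
    exact borderedDet_bilinear_natCast α I i j m

end BorderedDet

lemma Gdet_eq_borderedDet (n : ℕ) (ζ a : Fin n → ℝ) :
    Gdet n ζ a = borderedDet (alphaM n ζ a) (Imom n ζ a) :=
  rfl

/-- Lemma 2.8, identity (2.19): for all `i, j ∈ ℤ` and `k ≥ 1`,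
`G_{k+1}^{(i,j)} G_{k-1}^{(i+1,j+1)} = G_k^{(i,j)} G_k^{(i+1,j+1)} - G_k^{(i,j+1)} G_k^{(i+1,j)}`. -/
theorem stmt_10 (n : ℕ) (hn : 1 ≤ n) (ζ a : Fin n → ℝ)
    (hζ0 : ∀ p, 0 < ζ p) (hζmono : StrictMono ζ) (ha : ∀ p, 0 < a p)
    (i j k : ℤ) (hk : 1 ≤ k) :
    Gdet n ζ a i j (k + 1) * Gdet n ζ a (i + 1) (j + 1) (k - 1) =
      Gdet n ζ a i j k * Gdet n ζ a (i + 1) (j + 1) k -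
        Gdet n ζ a i (j + 1) k * Gdet n ζ a (i + 1) j k := by
  rw [Gdet_eq_borderedDet]
  exact stmt_10_general (alphaM n ζ a) (Imom n ζ a) i j hk
end

section
/- For all integers i, j one has F_l^{(i,j)} > 0 for 0 ≤ l ≤ n, and for every integer k with 1 ≤ k ≤ n the following summation identities hold: Σ_{l=k}^{n} G_l^{(i,j)} F_l^{(i−1,j)} / ( F_l^{(i,j)} F_{l−1}^{(i,j)} ) = G_k^{(i−1,j)} / F_{k−1}^{(i,j)}, and Σ_{l=1}^{k} G_l^{(i,j)} F_{l−1}^{(i,j+1)} / ( F_l^{(i,j)} F_{l−1}^{(i,j)} ) = G_k^{(i,j+1)} / F_k^{(i,j)}. -/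
open Finset

/-!
Both sums telescope. Up to sign and an index shift, their terms are the differences of
`G_l^{(i-1,j)} / F_{l-1}^{(i,j)}` and of `G_l^{(i,j+1)} / F_l^{(i,j)}`: after clearing denominators
this is the Desnanot-Jacobi identity for the matrix of `G_{l+1}^{(i-1,j)}`, and a three-term Plücker
relation, respectively. The boundary terms vanish because `G_0 = 0` and because the matrix of
`G_{n+1}` factors through the `n` points `ζ_p`.

The denominators are positive: the matrix of `F_k^{(i,j)}` is a product `A K B` of two weighted
power matrices and the Cauchy kernel `1 / (ζ_p + ζ_q)`. Applying Andréief's identity twice and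
evaluating the Vandermonde and Cauchy minors turns `(k!)² F_k^{(i,j)}` into a sum of nonnegative
terms, which are positive when the points `ζ_p` and the points `ζ_q` are all distinct.
-/

lemma sum_Icc_int_sub {A : Type*} [AddCommGroup A] (f : ℤ → A) {k m : ℤ} (hkm : k ≤ m) :
    ∑ l ∈ Icc k m, (f (l + 1) - f l) = f (m + 1) - f k := by
  induction m, hkm using Int.leInduction with
  | base => simp
  | succ m hm ih =>
    have hinsert : Icc k (m + 1) = insert (m + 1) (Icc k m) := by
      ext l
      simp only [mem_Icc, mem_insert]
      omega
    rw [hinsert, sum_insert (by simp), ih]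
    abel

section LinearAlgebra

open Matrix

variable {R m n : Type*} [CommRing R] [Fintype m] [DecidableEq m] [Fintype n]

lemma det_mul_eq_sum_prod_mul_det (A : Matrix m n R) (B : Matrix n m R) :
    (A * B).det = ∑ p : m → n, (∏ r, A r (p r)) * (B.submatrix p id).det := by
  classical
  have hrows : A * B = fun r => ∑ q, A r q • B q := by
    ext r s
    simp [mul_apply]
  calc (A * B).det = detRowAlternating.toMultilinearMap fun r => ∑ q, A r q • B q := by
        rw [hrows]; rfl
    _ = ∑ p : m → n, detRowAlternating.toMultilinearMap fun r => A r (p r) • B (p r) :=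
        MultilinearMap.map_sum _ _
    _ = _ := Finset.sum_congr rfl fun p _ =>
        MultilinearMap.map_smul_univ _ (fun r => A r (p r)) fun r => B (p r)

lemma det_mul_eq_zero_of_card_lt (h : Fintype.card n < Fintype.card m) (A : Matrix m n R)
    (B : Matrix n m R) : (A * B).det = 0 := by
  rw [det_mul_eq_sum_prod_mul_det]
  refine Finset.sum_eq_zero fun p _ => ?_
  obtain ⟨r, s, hrs, hp⟩ := Fintype.exists_ne_map_eq_of_card_lt p h
  rw [det_zero_of_row_eq hrs (by ext; simp [hp]), mul_zero]

/-- Andréief's identity, a form of the Cauchy-Binet formula. -/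
lemma factorial_card_mul_det_mul (A : Matrix m n R) (B : Matrix n m R) :
    ((Fintype.card m).factorial : R) * (A * B).det =
      ∑ p : m → n, (A.submatrix id p).det * (B.submatrix p id).det := by
  have hperm (σ : Equiv.Perm m) : (A * B).det = ∑ p : m → n,
      (Equiv.Perm.sign σ : ℤ) * (∏ r, A r (p (σ r))) * (B.submatrix p id).det := by
    rw [det_mul_eq_sum_prod_mul_det, ← (Equiv.arrowCongr σ.symm (Equiv.refl n)).sum_comp]
    refine Finset.sum_congr rfl fun p _ => ?_
    have hB : B.submatrix (p ∘ σ) id = (B.submatrix p id).submatrix σ id := rfl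
    change (∏ r, A r (p (σ r))) * (B.submatrix (p ∘ σ) id).det = _
    rw [hB, det_permute]
    ring
  calc ((Fintype.card m).factorial : R) * (A * B).det
      = ∑ _σ : Equiv.Perm m, (A * B).det := by simp [Fintype.card_perm]
    _ = ∑ p : m → n, (∑ σ : Equiv.Perm m, (Equiv.Perm.sign σ : ℤ) * ∏ r, A r (p (σ r))) *
          (B.submatrix p id).det := by
        simp_rw [Finset.sum_mul]
        rw [Finset.sum_comm]
        exact Finset.sum_congr rfl fun σ _ => hperm σ
    _ = _ := Finset.sum_congr rfl fun p _ => by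
        rw [← det_transpose (A.submatrix id p), det_apply' (A.submatrix id p)ᵀ]
        rfl

lemma factorial_card_sq_mul_det_mul_mul {l : Type*} [Fintype l] (A : Matrix m n R)
    (K : Matrix n l R) (B : Matrix l m R) :
    ((Fintype.card m).factorial : R) ^ 2 * (A * (K * B)).det =
      ∑ p : m → n, ∑ q : m → l,
        (A.submatrix id p).det * (K.submatrix p q).det * (B.submatrix q id).det := by
  rw [pow_two, mul_assoc, factorial_card_mul_det_mul, Finset.mul_sum]
  refine Finset.sum_congr rfl fun p _ => ?_
  have hrows : (K * B).submatrix p id = K.submatrix p id * B := rfl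
  rw [hrows, mul_left_comm, factorial_card_mul_det_mul, Finset.mul_sum]
  exact Finset.sum_congr rfl fun q _ => (mul_assoc _ _ _).symm

lemma det_toBlocks₁₁_adjugate_mul_det [DecidableEq n] (M : Matrix (m ⊕ n) (m ⊕ n) R) :
    M.adjugate.toBlocks₁₁.det * M.det = M.det ^ Fintype.card m * M.toBlocks₂₂.det := by
  let N : Matrix (m ⊕ n) (m ⊕ n) R :=
    fromBlocks M.adjugate.toBlocks₁₁ 0 M.adjugate.toBlocks₂₁ 1
  have hmul : M * N = fromBlocks (M.det • 1) M.toBlocks₁₂ 0 M.toBlocks₂₂ := by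
    ext i (j | j)
    · have hcol : (M * N) i (.inl j) = (M * M.adjugate) i (.inl j) := by
        simp [N, mul_apply, toBlocks₁₁, toBlocks₂₁]
      rw [hcol, mul_adjugate]
      cases i <;> simp [one_apply]
    · cases i <;> simp [N, mul_apply, one_apply, toBlocks₁₂, toBlocks₂₂]
  simpa [N, mul_comm] using congrArg det hmul

/-- Jacobi's identity for the minors of the adjugate. -/
lemma det_toBlocks₁₁_adjugate [DecidableEq n] [Nonempty m] (M : Matrix (m ⊕ n) (m ⊕ n) R) :
    M.adjugate.toBlocks₁₁.det = M.det ^ (Fintype.card m - 1) * M.toBlocks₂₂.det := by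
  let X := mvPolynomialX (m ⊕ n) (m ⊕ n) ℤ
  have hX : X.adjugate.toBlocks₁₁.det = X.det ^ (Fintype.card m - 1) * X.toBlocks₂₂.det := by
    apply mul_right_cancel₀ (det_mvPolynomialX_ne_zero (m ⊕ n) ℤ)
    rw [det_toBlocks₁₁_adjugate_mul_det, mul_right_comm, pow_sub_one_mul Fintype.card_ne_zero]
  let φ := MvPolynomial.aeval (R := ℤ) fun ij : (m ⊕ n) × (m ⊕ n) => M ij.1 ij.2
  have hM : φ.mapMatrix X = M := mvPolynomialX_mapMatrix_aeval ℤ M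
  have hblock₁₁ : M.adjugate.toBlocks₁₁ = φ.mapMatrix X.adjugate.toBlocks₁₁ := by
    rw [← hM, ← AlgHom.map_adjugate]; rfl
  have hblock₂₂ : M.toBlocks₂₂ = φ.mapMatrix X.toBlocks₂₂ := by
    rw [← hM]; rfl
  rw [hblock₁₁, hblock₂₂, ← AlgHom.map_det, hX, map_mul, map_pow, AlgHom.map_det, AlgHom.map_det,
    hM]

/-- The equivalence that singles out the first and the last index of `Fin (m + 2)`, so that
corner and interior entries of a matrix become blocks. -/
noncomputable def finEndsSumInteriorEquiv (m : ℕ) : Fin 2 ⊕ Fin m ≃ Fin (m + 2) :=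
  Equiv.ofBijective (Sum.elim ![0, Fin.last (m + 1)] fun i => i.castSucc.succ) <| by
    refine (Fintype.bijective_iff_injective_and_card _).2 ⟨?_, by simp [add_comm]⟩
    rintro (i | i) (j | j) h
    · fin_cases i <;> fin_cases j <;> simp_all [Fin.ext_iff]
    · fin_cases i <;> simp_all [Fin.ext_iff, j.isLt.ne']
    · fin_cases j <;> simp_all [Fin.ext_iff, i.isLt.ne]
    · simp_all

theorem desnanot_jacobi_s11 {R : Type*} [CommRing R] {m : ℕ}
    (M : Matrix (Fin (m + 2)) (Fin (m + 2)) R) :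
    M.det * (M.submatrix (fun i : Fin m => i.castSucc.succ) fun i => i.castSucc.succ).det =
      (M.submatrix Fin.succ Fin.succ).det * (M.submatrix Fin.castSucc Fin.castSucc).det -
        (M.submatrix Fin.succ Fin.castSucc).det * (M.submatrix Fin.castSucc Fin.succ).det := by
  let e := finEndsSumInteriorEquiv m
  have hcorners : (M.submatrix e e).adjugate.toBlocks₁₁ =
      !![M.adjugate 0 0, M.adjugate 0 (Fin.last (m + 1));
        M.adjugate (Fin.last (m + 1)) 0, M.adjugate (Fin.last (m + 1)) (Fin.last (m + 1))] := by
    ext i j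
    rw [adjugate_submatrix_equiv_self]
    fin_cases i <;> fin_cases j <;> rfl
  have hinterior : (M.submatrix e e).toBlocks₂₂ =
      M.submatrix (fun i : Fin m => i.castSucc.succ) fun i => i.castSucc.succ := rfl
  have hsign : ((-1 : R) ^ (m + 1)) * (-1) ^ (m + 1) = 1 := by
    rw [← mul_pow]; simp
  have hjacobi := det_toBlocks₁₁_adjugate (M.submatrix e e)
  rw [hcorners, hinterior, det_fin_two_of, det_submatrix_equiv_self] at hjacobi
  simp only [adjugate_fin_succ_eq_det_submatrix, Fin.succAbove_zero, Fin.succAbove_last,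
    Fin.val_zero, Fin.val_last, Fintype.card_fin, Nat.add_one_sub_one, pow_add _ (m + 1) (m + 1),
    hsign, add_zero, zero_add, pow_zero, pow_one, one_mul] at hjacobi
  linear_combination -hjacobi - (M.submatrix Fin.succ Fin.castSucc).det *
    (M.submatrix Fin.castSucc Fin.succ).det * hsign

lemma det_eq_of_row_zero_eq_single {R : Type*} [CommRing R] {n : ℕ}
    {M : Matrix (Fin (n + 1)) (Fin (n + 1)) R} {j : Fin (n + 1)} (h : M 0 = Pi.single j 1) :
    M.det = (-1) ^ (j : ℕ) * (M.submatrix Fin.succ j.succAbove).det := by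
  rw [det_succ_row_zero, Finset.sum_eq_single j]
  · simp [h]
  · intro s _ hs
    simp [h, hs]
  · simp

theorem plucker_three_term {R : Type*} [CommRing R] {m : ℕ}
    (P : Matrix (Fin (m + 2)) (Fin (m + 3)) R) :
    (P.submatrix id (Fin.succAbove 1)).det *
        (P.submatrix Fin.castSucc fun s : Fin (m + 1) => s.castSucc.succ).det =
      (P.submatrix id Fin.succ).det *
          (P.submatrix Fin.castSucc fun s : Fin (m + 1) => (Fin.succAbove 1 s).castSucc).det +
        (P.submatrix id Fin.castSucc).det *
          (P.submatrix Fin.castSucc fun s : Fin (m + 1) => s.succ.succ).det := by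
  -- With the unit row `e₁` on top of `P`, this becomes an instance of Desnanot-Jacobi.
  let N : Matrix (Fin (m + 3)) (Fin (m + 3)) R := of (vecCons (Pi.single 1 1) P)
  have hN : N.det = -(P.submatrix id (Fin.succAbove 1)).det := by
    have hminor : N.submatrix Fin.succ (Fin.succAbove 1) = P.submatrix id (Fin.succAbove 1) := rfl
    simp [det_eq_of_row_zero_eq_single (M := N) (j := 1) rfl, hminor]
  have hcast : (N.submatrix Fin.castSucc Fin.castSucc).det =
      -(P.submatrix Fin.castSucc fun s : Fin (m + 1) => (Fin.succAbove 1 s).castSucc).det := by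
    have hrow : N.submatrix Fin.castSucc Fin.castSucc 0 = Pi.single 1 1 := by
      ext s
      simp [N, Pi.single_apply, Fin.ext_iff]
    have hminor : (N.submatrix Fin.castSucc Fin.castSucc).submatrix Fin.succ (Fin.succAbove 1) =
        P.submatrix Fin.castSucc fun s : Fin (m + 1) => (Fin.succAbove 1 s).castSucc := rfl
    simp [det_eq_of_row_zero_eq_single hrow, hminor]
  have hcast_succ : (N.submatrix Fin.castSucc Fin.succ).det =
      (P.submatrix Fin.castSucc fun s : Fin (m + 1) => s.succ.succ).det := by
    have hrow : N.submatrix Fin.castSucc Fin.succ 0 = Pi.single 0 1 := by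
      ext s
      change (Pi.single 1 1 : Fin (m + 3) → R) s.succ = _
      simp only [Pi.single_apply, ← Fin.succ_zero_eq_one, Fin.succ_inj]
    have hminor : (N.submatrix Fin.castSucc Fin.succ).submatrix Fin.succ (Fin.succAbove 0) =
        P.submatrix Fin.castSucc fun s : Fin (m + 1) => s.succ.succ := rfl
    rw [det_eq_of_row_zero_eq_single hrow, hminor, Fin.val_zero, pow_zero, one_mul]
  have hsucc : N.submatrix Fin.succ Fin.succ = P.submatrix id Fin.succ := rfl
  have hsucc_cast : N.submatrix Fin.succ Fin.castSucc = P.submatrix id Fin.castSucc := rfl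
  have hinner : (N.submatrix (fun i : Fin (m + 1) => i.castSucc.succ) fun i => i.castSucc.succ) =
      P.submatrix Fin.castSucc fun s : Fin (m + 1) => s.castSucc.succ := rfl
  have hdesnanot := desnanot_jacobi_s11 N
  rw [hN, hcast, hcast_succ, hsucc, hsucc_cast, hinner] at hdesnanot
  linear_combination -hdesnanot

lemma det_vandermonde_fin_succ {R : Type*} [CommRing R] {n : ℕ} (v : Fin (n + 1) → R) :
    (vandermonde v).det =
      (∏ i : Fin n, (v i.succ - v 0)) * (vandermonde fun i => v i.succ).det := by
  simp only [det_vandermonde, Fin.prod_univ_succ, Fin.prod_Ioi_zero, Fin.prod_Ioi_succ]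

/-- The Cauchy matrix `((x i + y j)⁻¹)`, which is the kernel of the bimoments; entries with
`x i + y j = 0` are `0`. -/
def cauchyMatrix {K m n : Type*} [Field K] (x : m → K) (y : n → K) : Matrix m n K :=
  of fun i j => (x i + y j)⁻¹

lemma det_cauchyMatrix_succ {K : Type*} [Field K] {n : ℕ} (x y : Fin (n + 1) → K)
    (h : ∀ i j, x i + y j ≠ 0) :
    (cauchyMatrix x y).det =
      (x 0 + y 0)⁻¹ * (∏ i : Fin n, (x i.succ - x 0) / (x i.succ + y 0)) *
        (∏ j : Fin n, (y j.succ - y 0) / (x 0 + y j.succ)) *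
        (cauchyMatrix (fun i : Fin n => x i.succ) fun j : Fin n => y j.succ).det := by
  -- `B` arises by clearing the first column below the diagonal with row `0`.
  let B : Matrix (Fin (n + 1)) (Fin (n + 1)) K := of <| vecCons (fun j => (x 0 + y j)⁻¹) fun i j =>
    (x i.succ - x 0) * (y j - y 0) / ((x i.succ + y j) * (x i.succ + y 0) * (x 0 + y j))
  have hB : (cauchyMatrix x y).det = B.det := by
    refine det_eq_of_forall_row_eq_smul_add_const
      (vecCons 0 fun i => (x 0 + y 0) / (x i.succ + y 0)) 0 rfl fun i j => ?_
    cases i using Fin.cases with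
    | zero => simp [B, cauchyMatrix]
    | succ i =>
      have hij := h i.succ j
      have hi := h i.succ 0
      have hj := h 0 j
      simp only [B, cauchyMatrix, of_apply, cons_val_succ, cons_val_zero]
      field_simp
      ring
  have hminor : B.submatrix Fin.succ Fin.succ = of fun i j =>
      (x i.succ - x 0) / (x i.succ + y 0) * (of fun i j =>
        (y j.succ - y 0) / (x 0 + y j.succ) *
          cauchyMatrix (fun i : Fin n => x i.succ) (fun j : Fin n => y j.succ) i j) i j := by
    ext i j
    simp only [B, cauchyMatrix, submatrix_apply, of_apply, cons_val_succ]
    field_simp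
  rw [hB, det_succ_column_zero, Finset.sum_eq_single 0, Fin.succAbove_zero, hminor,
    det_mul_column, det_mul_row]
  · simp only [B, of_apply, cons_val_zero, Fin.val_zero, pow_zero, one_mul]
    ring
  · intro i _ hi
    obtain ⟨i, rfl⟩ := Fin.exists_succ_eq.2 hi
    simp [B]
  · simp

theorem det_cauchyMatrix {K : Type*} [Field K] {n : ℕ} (x y : Fin n → K)
    (h : ∀ i j, x i + y j ≠ 0) :
    (cauchyMatrix x y).det =
      (vandermonde x).det * (vandermonde y).det / ∏ i, ∏ j, (x i + y j) := by
  induction n with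
  | zero => simp
  | succ n ih =>
    rw [det_cauchyMatrix_succ x y h, ih (fun i => x i.succ) (fun i => y i.succ) fun i j => h _ _,
      det_vandermonde_fin_succ x, det_vandermonde_fin_succ y]
    simp only [Finset.prod_div_distrib, Fin.prod_univ_succ, Finset.prod_mul_distrib]
    field_simp

lemma det_vandermonde_mul_det_cauchyMatrix {K : Type*} [Field K] {n : ℕ} (x y : Fin n → K)
    (h : ∀ i j, x i + y j ≠ 0) :
    (vandermonde x).det * (cauchyMatrix x y).det * (vandermonde y).det =
      (vandermonde x).det ^ 2 * (vandermonde y).det ^ 2 / ∏ i, ∏ j, (x i + y j) := by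
  rw [det_cauchyMatrix x y h]
  ring

end LinearAlgebra

section MomentDeterminants

variable {n : ℕ} (ζ a : Fin n → ℝ)

/-- The matrix `(I_{i+r,j+s})` of bimoments, with `k` rows and `l` columns. -/
noncomputable def bimomentMatrix (i j : ℤ) (k l : ℕ) : Matrix (Fin k) (Fin l) ℝ :=
  Matrix.of fun r s => Imom n ζ a (i + (r : ℕ)) (j + (s : ℕ))

/-- The matrix underlying `G`: the column of single moments `α_{i-1+r}` followed by `l` columns of
bimoments. It need not be square, so that both recurrences are identities between its minors. -/
noncomputable def momentMatrix (i j : ℤ) (k l : ℕ) : Matrix (Fin k) (Fin (l + 1)) ℝ :=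
  Matrix.of fun r => Matrix.vecCons (alphaM n ζ a (i - 1 + (r : ℕ))) (bimomentMatrix ζ a i j k l r)

lemma Fdet_natCast (i j : ℤ) (k : ℕ) :
    Fdet n ζ a i j k = (bimomentMatrix ζ a i j k k).det := by
  rw [Fdet, if_neg (by omega)]
  rfl

lemma Gdet_natCast (i j : ℤ) (k : ℕ) :
    Gdet n ζ a i j (k + 1 : ℕ) = (momentMatrix ζ a i j (k + 1) k).det := by
  rw [Gdet, if_neg (by omega)]
  change Matrix.det (n := Fin (k + 1)) _ = _
  congr 1
  ext r s
  cases s using Fin.cases <;> simp [momentMatrix, bimomentMatrix]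

lemma Fdet_zero (i j : ℤ) : Fdet n ζ a i j 0 = 1 := by
  simp [Fdet]

lemma Gdet_one (i j : ℤ) : Gdet n ζ a i j 1 = alphaM n ζ a (i - 1) := by
  simp [Gdet]

lemma Gdet_zero (i j : ℤ) : Gdet n ζ a i j 0 = 0 :=
  if_pos one_pos

lemma bimomentMatrix_submatrix_succ_left (i j : ℤ) (k l : ℕ) :
    (bimomentMatrix ζ a i j (k + 1) l).submatrix Fin.succ id =
      bimomentMatrix ζ a (i + 1) j k l := by
  ext r s
  simp [bimomentMatrix, add_assoc, add_comm (1 : ℤ)]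

lemma bimomentMatrix_submatrix_succ_right (i j : ℤ) (k l : ℕ) :
    (bimomentMatrix ζ a i j k (l + 1)).submatrix id Fin.succ =
      bimomentMatrix ζ a i (j + 1) k l := by
  ext r s
  simp [bimomentMatrix, add_assoc, add_comm (1 : ℤ)]

lemma momentMatrix_submatrix_succ_left (i j : ℤ) (k l : ℕ) :
    (momentMatrix ζ a i j (k + 1) l).submatrix Fin.succ id = momentMatrix ζ a (i + 1) j k l := by
  ext r s
  cases s using Fin.cases <;>
    simp [momentMatrix, bimomentMatrix, add_assoc, add_comm (1 : ℤ), sub_add_add_cancel]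

lemma momentMatrix_submatrix_castSucc_right (i j : ℤ) (k l : ℕ) :
    (momentMatrix ζ a i j k (l + 1)).submatrix id Fin.castSucc = momentMatrix ζ a i j k l := by
  ext r s
  cases s using Fin.cases <;> rfl

lemma momentMatrix_submatrix_succAbove_one (i j : ℤ) (k l : ℕ) :
    (momentMatrix ζ a i j k (l + 1)).submatrix id (Fin.succAbove 1) =
      momentMatrix ζ a i (j + 1) k l := by
  rw [momentMatrix, momentMatrix, ← bimomentMatrix_submatrix_succ_right]
  ext r s
  cases s using Fin.cases <;> simp

lemma Gdet_mul_Fdet_sub_one_left (i j : ℤ) (m : ℕ) :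
    Gdet n ζ a (i - 1) j (m + 1 + 1) * Fdet n ζ a i j m =
      Fdet n ζ a i j (m + 1) * Gdet n ζ a (i - 1) j (m + 1) -
        Gdet n ζ a i j (m + 1) * Fdet n ζ a (i - 1) j (m + 1) := by
  let M := momentMatrix ζ a (i - 1) j (m + 2) (m + 1)
  have hrows (l : ℕ) := bimomentMatrix_submatrix_succ_left ζ a (i - 1) j l l
  have hinner : M.submatrix (fun r : Fin m => r.castSucc.succ) (fun s => s.castSucc.succ) =
      bimomentMatrix ζ a i j m m := (hrows m).trans (by rw [sub_add_cancel])
  have hsucc : M.submatrix Fin.succ Fin.succ = bimomentMatrix ζ a i j (m + 1) (m + 1) :=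
    (hrows (m + 1)).trans (by rw [sub_add_cancel])
  have hcast : M.submatrix Fin.castSucc Fin.castSucc = momentMatrix ζ a (i - 1) j (m + 1) m :=
    momentMatrix_submatrix_castSucc_right ζ a (i - 1) j (m + 1) m
  have hcast_succ :
      M.submatrix Fin.castSucc Fin.succ = bimomentMatrix ζ a (i - 1) j (m + 1) (m + 1) := rfl
  have hsucc_cast : M.submatrix Fin.succ Fin.castSucc = momentMatrix ζ a i j (m + 1) m :=
    calc M.submatrix Fin.succ Fin.castSucc
        = (momentMatrix ζ a (i - 1) j (m + 2) m).submatrix Fin.succ id := by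
          rw [← momentMatrix_submatrix_castSucc_right]; rfl
      _ = _ := by rw [momentMatrix_submatrix_succ_left, sub_add_cancel]
  have hdesnanot := desnanot_jacobi_s11 M
  rw [hinner, hsucc, hsucc_cast, hcast, hcast_succ] at hdesnanot
  simp only [← Nat.cast_add_one, Fdet_natCast, Gdet_natCast]
  linear_combination hdesnanot

lemma Gdet_add_one_right_mul_Fdet (i j : ℤ) (m : ℕ) :
    Gdet n ζ a i (j + 1) (m + 1) * Fdet n ζ a i j m =
      Fdet n ζ a i j (m + 1) * Gdet n ζ a i (j + 1) m +
        Gdet n ζ a i j (m + 1) * Fdet n ζ a i (j + 1) m := by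
  cases m with
  | zero => simp [Gdet_zero, Gdet_one, Fdet_zero]
  | succ m =>
    let P := momentMatrix ζ a i j (m + 2) (m + 2)
    have hdrop₁ : P.submatrix id (Fin.succAbove 1) = momentMatrix ζ a i (j + 1) (m + 2) (m + 1) :=
      momentMatrix_submatrix_succAbove_one ζ a i j (m + 2) (m + 1)
    have hdrop₁' : P.submatrix Fin.castSucc (fun s : Fin (m + 1) => (Fin.succAbove 1 s).castSucc) =
        momentMatrix ζ a i (j + 1) (m + 1) m := by
      rw [← momentMatrix_submatrix_succAbove_one, ← momentMatrix_submatrix_castSucc_right]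
      rfl
    have hdrop₀ : P.submatrix id Fin.succ = bimomentMatrix ζ a i j (m + 2) (m + 2) := rfl
    have hdrop₀' : P.submatrix Fin.castSucc (fun s : Fin (m + 1) => s.castSucc.succ) =
        bimomentMatrix ζ a i j (m + 1) (m + 1) := rfl
    have hdrop₀₁ : P.submatrix Fin.castSucc (fun s : Fin (m + 1) => s.succ.succ) =
        bimomentMatrix ζ a i (j + 1) (m + 1) (m + 1) :=
      bimomentMatrix_submatrix_succ_right ζ a i j (m + 1) (m + 1)
    have hlast : P.submatrix id Fin.castSucc = momentMatrix ζ a i j (m + 2) (m + 1) :=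
      momentMatrix_submatrix_castSucc_right ζ a i j (m + 2) (m + 1)
    have hplucker := plucker_three_term P
    rw [hdrop₁, hdrop₁', hdrop₀, hdrop₀', hdrop₀₁, hlast] at hplucker
    simp only [← Nat.cast_add_one, Fdet_natCast, Gdet_natCast]
    exact hplucker

/-- The matrix `(ζ_p^{i+r} a_p)` of weighted powers, which expresses moments and bimoments as matrix
products over the points `ζ_p`. -/
noncomputable def powerMatrix (i : ℤ) (k : ℕ) : Matrix (Fin k) (Fin n) ℝ :=
  Matrix.of fun r p => ζ p ^ (i + (r : ℕ)) * a p

lemma bimomentMatrix_eq_mul (i j : ℤ) (k l : ℕ) :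
    bimomentMatrix ζ a i j k l =
      powerMatrix ζ a i k * (cauchyMatrix ζ ζ * (powerMatrix ζ a j l).transpose) := by
  ext r s
  simp only [bimomentMatrix, powerMatrix, cauchyMatrix, Imom, Matrix.of_apply, Matrix.mul_apply,
    Matrix.transpose_apply, mul_sum]
  refine sum_congr rfl fun p _ => sum_congr rfl fun q _ => ?_
  ring

lemma momentMatrix_eq_mul (hζ : ∀ p, ζ p ≠ 0) (i j : ℤ) (k l : ℕ) :
    momentMatrix ζ a i j k l = powerMatrix ζ a i k * Matrix.of fun p =>
      Matrix.vecCons (ζ p)⁻¹ ((cauchyMatrix ζ ζ * (powerMatrix ζ a j l).transpose) p) := by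
  rw [momentMatrix, bimomentMatrix_eq_mul]
  ext r s
  cases s using Fin.cases with
  | zero =>
    simp only [powerMatrix, alphaM, Matrix.of_apply, Matrix.mul_apply, Matrix.cons_val_zero]
    refine sum_congr rfl fun p _ => ?_
    rw [sub_add_eq_add_sub, zpow_sub_one₀ (hζ p), mul_right_comm]
  | succ s => rfl

theorem Gdet_natCast_add_one_eq_zero (hζ : ∀ p, ζ p ≠ 0) (i j : ℤ) :
    Gdet n ζ a i j (n + 1) = 0 := by
  rw [← Nat.cast_add_one, Gdet_natCast, momentMatrix_eq_mul ζ a hζ]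
  exact det_mul_eq_zero_of_card_lt (by simp) _ _

lemma det_powerMatrix_submatrix (hζ : ∀ p, ζ p ≠ 0) (i : ℤ) {k : ℕ} (p : Fin k → Fin n) :
    ((powerMatrix ζ a i k).submatrix id p).det =
      (∏ r, ζ (p r) ^ i * a (p r)) * (Matrix.vandermonde (ζ ∘ p)).det := by
  rw [← Matrix.det_transpose, ← Matrix.det_mul_column]
  congr 1
  ext r s
  simp only [powerMatrix, Matrix.transpose_apply, Matrix.submatrix_apply, Matrix.of_apply, id,
    Matrix.vandermonde_apply, Function.comp_apply, zpow_add₀ (hζ _), zpow_natCast]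
  ring

variable {ζ a}

lemma factorial_sq_mul_Fdet (hζ : ∀ p, 0 < ζ p) (i j : ℤ) (k : ℕ) :
    (k.factorial : ℝ) ^ 2 * Fdet n ζ a i j k =
      ∑ p : Fin k → Fin n, ∑ q : Fin k → Fin n,
        (∏ r, ζ (p r) ^ i * a (p r)) * (∏ r, ζ (q r) ^ j * a (q r)) *
          ((Matrix.vandermonde (ζ ∘ p)).det ^ 2 * (Matrix.vandermonde (ζ ∘ q)).det ^ 2 /
            ∏ r, ∏ s, (ζ (p r) + ζ (q s))) := by
  have handreief := factorial_card_sq_mul_det_mul_mul (powerMatrix ζ a i k) (cauchyMatrix ζ ζ)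
    (powerMatrix ζ a j k).transpose
  rw [Fdet_natCast, bimomentMatrix_eq_mul]
  rw [Fintype.card_fin] at handreief
  rw [handreief]
  refine sum_congr rfl fun p _ => sum_congr rfl fun q _ => ?_
  have hcauchy := det_vandermonde_mul_det_cauchyMatrix (ζ ∘ p) (ζ ∘ q) fun r s =>
    (add_pos (hζ (p r)) (hζ (q s))).ne'
  simp only [Function.comp_apply] at hcauchy
  have hsub : (cauchyMatrix ζ ζ).submatrix p q = cauchyMatrix (ζ ∘ p) (ζ ∘ q) := rfl
  have hζ' (p : Fin n) : ζ p ≠ 0 := (hζ p).ne'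
  rw [← hcauchy, ← Matrix.transpose_submatrix, Matrix.det_transpose, hsub,
    det_powerMatrix_submatrix ζ a hζ', det_powerMatrix_submatrix ζ a hζ']
  ring

theorem Fdet_natCast_pos (hζ : ∀ p, 0 < ζ p) (hinj : Function.Injective ζ) (ha : ∀ p, 0 < a p)
    (i j : ℤ) {k : ℕ} (hk : k ≤ n) : 0 < Fdet n ζ a i j k := by
  have hweight (i : ℤ) (p : Fin k → Fin n) : 0 < ∏ r, ζ (p r) ^ i * a (p r) :=
    prod_pos fun r _ => mul_pos (zpow_pos (hζ _) _) (ha _)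
  have hdenom (p q : Fin k → Fin n) : 0 < ∏ r, ∏ s, (ζ (p r) + ζ (q s)) :=
    prod_pos fun r _ => prod_pos fun s _ => add_pos (hζ _) (hζ _)
  have hterm (p q : Fin k → Fin n) :
      0 ≤ (∏ r, ζ (p r) ^ i * a (p r)) * (∏ r, ζ (q r) ^ j * a (q r)) *
        ((Matrix.vandermonde (ζ ∘ p)).det ^ 2 * (Matrix.vandermonde (ζ ∘ q)).det ^ 2 /
          ∏ r, ∏ s, (ζ (p r) + ζ (q s))) :=
    mul_nonneg (mul_pos (hweight i p) (hweight j q)).le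
      (div_nonneg (by positivity) (hdenom p q).le)
  have hvandermonde : (Matrix.vandermonde (ζ ∘ Fin.castLE hk)).det ≠ 0 :=
    Matrix.det_vandermonde_ne_zero_iff.2 (hinj.comp (Fin.castLE_injective hk))
  refine pos_of_mul_pos_right (a := (k.factorial : ℝ) ^ 2) ?_ (by positivity)
  rw [factorial_sq_mul_Fdet hζ]
  refine sum_pos' (fun p _ => sum_nonneg fun q _ => hterm p q) ⟨Fin.castLE hk, mem_univ _, ?_⟩
  refine sum_pos' (fun q _ => hterm _ q) ⟨Fin.castLE hk, mem_univ _, ?_⟩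
  exact mul_pos (mul_pos (hweight i _) (hweight j _)) (div_pos (by positivity) (hdenom _ _))

theorem sum_Icc_Gdet_mul_Fdet_sub_one_left (hζ : ∀ p, ζ p ≠ 0) {i j k : ℤ} (hk : 1 ≤ k)
    (hkn : k ≤ n) (hF : ∀ l : ℤ, 0 ≤ l → l ≤ n → Fdet n ζ a i j l ≠ 0) :
    ∑ l ∈ Icc k (n : ℤ), Gdet n ζ a i j l * Fdet n ζ a (i - 1) j l /
        (Fdet n ζ a i j l * Fdet n ζ a i j (l - 1)) =
      Gdet n ζ a (i - 1) j k / Fdet n ζ a i j (k - 1) := by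
  let f (l : ℤ) : ℝ := -(Gdet n ζ a (i - 1) j l / Fdet n ζ a i j (l - 1))
  have hdiff (l : ℤ) (hl : l ∈ Icc k (n : ℤ)) : Gdet n ζ a i j l * Fdet n ζ a (i - 1) j l /
      (Fdet n ζ a i j l * Fdet n ζ a i j (l - 1)) = f (l + 1) - f l := by
    obtain ⟨hkl, hln⟩ := mem_Icc.1 hl
    obtain ⟨m, rfl⟩ : ∃ m : ℕ, l = m + 1 := ⟨(l - 1).toNat, by lia⟩
    have hFm := hF m (by lia) (by lia)
    have hFm' := hF (m + 1) (by lia) hln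
    have hrec := Gdet_mul_Fdet_sub_one_left ζ a i j m
    simp only [f, add_sub_cancel_right]
    field_simp
    linear_combination hrec
  rw [sum_congr rfl hdiff, sum_Icc_int_sub f hkn]
  simp [f, Gdet_natCast_add_one_eq_zero ζ a hζ]

theorem sum_Icc_Gdet_mul_Fdet_add_one_right {i j k : ℤ} (hk : 1 ≤ k)
    (hF : ∀ l : ℤ, 0 ≤ l → l ≤ k → Fdet n ζ a i j l ≠ 0) :
    ∑ l ∈ Icc 1 k, Gdet n ζ a i j l * Fdet n ζ a i (j + 1) (l - 1) /
        (Fdet n ζ a i j l * Fdet n ζ a i j (l - 1)) =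
      Gdet n ζ a i (j + 1) k / Fdet n ζ a i j k := by
  let f (l : ℤ) : ℝ := Gdet n ζ a i (j + 1) (l - 1) / Fdet n ζ a i j (l - 1)
  have hdiff (l : ℤ) (hl : l ∈ Icc 1 k) : Gdet n ζ a i j l * Fdet n ζ a i (j + 1) (l - 1) /
      (Fdet n ζ a i j l * Fdet n ζ a i j (l - 1)) = f (l + 1) - f l := by
    obtain ⟨hl, hlk⟩ := mem_Icc.1 hl
    obtain ⟨m, rfl⟩ : ∃ m : ℕ, l = m + 1 := ⟨(l - 1).toNat, by lia⟩
    have hFm := hF m (by lia) (by lia)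
    have hFm' := hF (m + 1) (by lia) hlk
    have hrec := Gdet_add_one_right_mul_Fdet ζ a i j m
    simp only [f, add_sub_cancel_right]
    field_simp
    linear_combination -hrec
  rw [sum_congr rfl hdiff, sum_Icc_int_sub f hk]
  simp [f, Gdet_zero]

end MomentDeterminants

/-- Corollary 2.9: positivity of `F_l^{(i,j)}` for `0 ≤ l ≤ n`, and for `1 ≤ k ≤ n` the
summation identities
`Σ_{l=k}^{n} G_l^{(i,j)} F_l^{(i-1,j)} / (F_l^{(i,j)} F_{l-1}^{(i,j)}) = G_k^{(i-1,j)} / F_{k-1}^{(i,j)}`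
and
`Σ_{l=1}^{k} G_l^{(i,j)} F_{l-1}^{(i,j+1)} / (F_l^{(i,j)} F_{l-1}^{(i,j)}) = G_k^{(i,j+1)} / F_k^{(i,j)}`. -/
theorem stmt_11 (n : ℕ) (hn : 1 ≤ n) (ζ a : Fin n → ℝ)
    (hζ0 : ∀ p, 0 < ζ p) (hζmono : StrictMono ζ) (ha : ∀ p, 0 < a p) :
    (∀ i j l : ℤ, 0 ≤ l → l ≤ (n : ℤ) → 0 < Fdet n ζ a i j l) ∧
    (∀ i j k : ℤ, 1 ≤ k → k ≤ (n : ℤ) →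
      (∑ l ∈ Finset.Icc k (n : ℤ),
          Gdet n ζ a i j l * Fdet n ζ a (i - 1) j l /
            (Fdet n ζ a i j l * Fdet n ζ a i j (l - 1))) =
        Gdet n ζ a (i - 1) j k / Fdet n ζ a i j (k - 1) ∧
      (∑ l ∈ Finset.Icc (1 : ℤ) k,
          Gdet n ζ a i j l * Fdet n ζ a i (j + 1) (l - 1) /
            (Fdet n ζ a i j l * Fdet n ζ a i j (l - 1))) =
        Gdet n ζ a i (j + 1) k / Fdet n ζ a i j k) := by
  have hpos (i j l : ℤ) (hl : 0 ≤ l) (hln : l ≤ n) : 0 < Fdet n ζ a i j l := by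
    lift l to ℕ using hl
    exact Fdet_natCast_pos hζ0 hζmono.injective ha i j (by exact_mod_cast hln)
  refine ⟨hpos, fun i j k hk hkn => ⟨?_, ?_⟩⟩
  · exact sum_Icc_Gdet_mul_Fdet_sub_one_left (fun p => (hζ0 p).ne') hk hkn
      fun l hl hln => (hpos i j l hl hln).ne'
  · exact sum_Icc_Gdet_mul_Fdet_add_one_right hk
      fun l hl hlk => (hpos i j l hl (hlk.trans hkn)).ne'
end
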